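/- There exists a universal constant C (e.g. C=92) such that for every finite connected simple regular graph G = (V,E), if ω is a uniform spanning tree of G and X a uniformly random vertex independent of ω, then E[deg(X;ω)²] ≤ C. -/

import Mathlib

open Finset
open scoped Classical

/-- `T` is (the edge set of) a spanning tree of `G`. -/
def IsSpanningTree {V : Type*} [Fintype V] [DecidableEq V] (G : SimpleGraph V)
    (T : Finset (Sym2 V)) : Prop :=
  (T : Set (Sym2 V)) ⊆ G.edgeSet ∧ (SimpleGraph.fromEdgeSet (T : Set (Sym2 V))).IsTree

/-- Degree of a vertex in a configuration (finite set of edges). -/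
def degIn {V : Type*} [Fintype V] [DecidableEq V] (x : V) (T : Finset (Sym2 V)) : ℕ :=
  (T.filter fun e => x ∈ e).card

/-!
By the matrix-tree theorem, the probability that a uniform spanning tree avoids given edges is a
determinant of transfer currents. For one edge this is Kirchhoff's formula, for two edges it is
negative correlation, so that, with `R` the effective resistance and `x` fixed,
`E[deg(x)²] ≤ ∑ R(x, y) + (∑ R(x, y))² ≤ ∑ R(x, y) + deg(x) ∑ R(x, y)²`, sums over `y ∼ x`.

The terms linear in `R` are controlled by Foster's identity, so the point is a bound on `∑ R²`.
After one step of the random walk at both ends, `R(x, y) ≤ 1 / deg(x) + 1 / deg(y) + q(x, y)`, where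
`q` is the energy of a unit current from a random neighbour of `x` to a random neighbour of `y`. As
`R ≤ 1`, this gives `R² ≤ (2 / δ) R + q` with `δ` the minimal degree. The sum of `q` over the edges
is `tr P² - 1` for the transition matrix `P`, and `tr P² ≤ |V| / δ` because no step of the walk
has probability more than `1 / δ`.
-/

namespace UniformSpanningTree

open Matrix
open scoped BigOperators

variable {V : Type*}

section ParentMap

variable {r : V} {p q : V → V}

/-- The parent map `p` leads every vertex to the root `r`. The value `p r` is irrelevant. -/
def IsRootedAt (r : V) (p : V → V) : Prop :=
  ∀ v, ∃ k, p^[k] v = r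

theorem IsRootedAt.exists_height (hp : IsRootedAt r p) :
    ∃ h : V → ℕ, ∀ v ≠ r, h (p v) < h v := by
  refine ⟨fun v ↦ Nat.find (hp v), fun v hv ↦ ?_⟩
  obtain ⟨k, hk⟩ : ∃ k, Nat.find (hp v) = k + 1 :=
    Nat.exists_eq_succ_of_ne_zero fun h0 ↦ hv ((Nat.find_eq_zero (hp v)).1 h0)
  have hspec : p^[k] (p v) = r := by
    simpa only [hk, Function.iterate_succ_apply] using Nat.find_spec (hp v)
  change Nat.find (hp (p v)) < Nat.find (hp v)
  rw [hk]
  exact Nat.lt_succ_of_le (Nat.find_min' (hp (p v)) hspec)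

theorem isRootedAt_of_height (h : V → ℕ) (hh : ∀ v ≠ r, h (p v) < h v) : IsRootedAt r p := by
  intro v
  induction hn : h v using Nat.strong_induction_on generalizing v with
  | _ n ih =>
    by_cases hv : v = r
    · exact ⟨0, hv⟩
    · obtain ⟨k, hk⟩ := ih (h (p v)) (hn ▸ hh v hv) (p v) rfl
      exact ⟨k + 1, hk⟩

theorem IsRootedAt.ne_parent (hp : IsRootedAt r p) {v : V} (hv : v ≠ r) : v ≠ p v := by
  obtain ⟨h, hh⟩ := hp.exists_height
  exact fun heq ↦ (hh v hv).ne (congrArg h heq.symm)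

theorem edgeSet_fromEdgeSet_of_forall_not_isDiag {S : Set (Sym2 V)} (hS : ∀ e ∈ S, ¬ e.IsDiag) :
    (SimpleGraph.fromEdgeSet S).edgeSet = S := by
  rw [SimpleGraph.edgeSet_fromEdgeSet, sdiff_eq_left, Set.disjoint_left]
  simpa using hS

variable [Fintype V] [DecidableEq V]

/-- The matrix `1 - Q`, where `Q` sends each vertex other than the root `r` to its parent and
kills the root. -/
def parentMatrix (R : Type*) [CommRing R] (r : V) (p : V → V) : Matrix V V R :=
  of fun v ↦ Pi.single v 1 - if v = r then 0 else Pi.single (p v) 1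

variable {R : Type*} [CommRing R]

theorem det_smul_eq_zero_of_mulVec_eq_zero {A : Matrix V V R} {ψ : V → R} (hψ : A *ᵥ ψ = 0) :
    A.det • ψ = 0 := by
  rw [← one_mulVec ψ, ← smul_mulVec, ← adjugate_mul, ← mulVec_mulVec, hψ, mulVec_zero]

theorem parentMatrix_mulVec (ψ : V → R) (v : V) :
    (parentMatrix R r p *ᵥ ψ) v = ψ v - if v = r then 0 else ψ (p v) := by
  change (Pi.single v 1 - if v = r then 0 else Pi.single (p v) 1) ⬝ᵥ ψ = _
  split_ifs <;> simp [sub_dotProduct]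

theorem IsRootedAt.det_parentMatrix (hp : IsRootedAt r p) : (parentMatrix R r p).det = 1 := by
  obtain ⟨h, hh⟩ := hp.exists_height
  have hentry : ∀ v u, h v ≤ h u → parentMatrix R r p v u = (1 : Matrix V V R) v u := by
    intro v u hle
    by_cases hv : v = r
    · simp [parentMatrix, hv, one_apply, Pi.single_apply, eq_comm (a := u)]
    · have hu : u ≠ p v := fun hu ↦ (hh v hv).not_ge (hu ▸ hle)
      simp [parentMatrix, hv, hu, one_apply, Pi.single_apply, eq_comm (a := u)]
  have htri : (parentMatrix R r p).BlockTriangular (OrderDual.toDual ∘ h) := by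
    intro v u (huv : h v < h u)
    rw [hentry v u huv.le, one_apply_ne (by rintro rfl; exact huv.false)]
  rw [htri.det]
  refine prod_eq_one fun a _ ↦ ?_
  have hblock : (parentMatrix R r p).toSquareBlock (OrderDual.toDual ∘ h) a = 1 := by
    ext ⟨v, hv⟩ ⟨u, hu⟩
    rw [toSquareBlock_def, of_apply, hentry v u (hv.trans hu.symm).ge, one_apply, one_apply]
    simp only [Subtype.mk.injEq]
  rw [hblock, det_one]

theorem det_parentMatrix_of_not_isRootedAt (hp : ¬ IsRootedAt r p) :
    (parentMatrix R r p).det = 0 := by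
  simp only [IsRootedAt, not_forall, not_exists] at hp
  obtain ⟨v₀, hv₀⟩ := hp
  -- The indicator of the vertices that never reach the root is invariant under `p`.
  let ψ : V → R := fun v ↦ if ∃ k, p^[k] v = r then 0 else 1
  have hker : parentMatrix R r p *ᵥ ψ = 0 := by
    ext v
    rw [parentMatrix_mulVec, Pi.zero_apply]
    by_cases hv : v = r
    · have hreach : ∃ k, p^[k] v = r := ⟨0, hv⟩
      simp [ψ, hv, hv ▸ hreach]
    · have hreach : (∃ k, p^[k] v = r) ↔ ∃ k, p^[k] (p v) = r := by
        rw [← Nat.or_exists_add_one]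
        simp [hv]
      simp [ψ, hv, hreach]
  simpa [ψ, hv₀] using congrFun (det_smul_eq_zero_of_mulVec_eq_zero hker) v₀

/-- The edges `{v, p v}` from the vertices `v ≠ r` to their parents. -/
def parentEdges (r : V) (p : V → V) : Finset (Sym2 V) :=
  (univ.erase r).image fun v ↦ s(v, p v)

theorem mem_parentEdges {e : Sym2 V} : e ∈ parentEdges r p ↔ ∃ v ≠ r, s(v, p v) = e := by
  simp [parentEdges]

theorem IsRootedAt.card_parentEdges (hp : IsRootedAt r p) :
    #(parentEdges r p) + 1 = Fintype.card V := by
  obtain ⟨h, hh⟩ := hp.exists_height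
  have hinj : Set.InjOn (fun v ↦ s(v, p v)) (univ.erase r : Finset V) := by
    intro u hu v hv huv
    rw [mem_coe, mem_erase] at hu hv
    rcases Sym2.eq_iff.1 huv with ⟨huv, _⟩ | ⟨hupv, hpuv⟩
    · exact huv
    · have hu := hh u hu.1
      have hv := hh v hv.1
      rw [hpuv] at hu
      rw [← hupv] at hv
      exact absurd hu hv.not_gt
  rw [parentEdges, card_image_of_injOn hinj, card_erase_add_one (mem_univ r), card_univ]

theorem IsRootedAt.isTree (hp : IsRootedAt r p) :
    (SimpleGraph.fromEdgeSet (parentEdges r p : Set (Sym2 V))).IsTree := by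
  obtain ⟨h, hh⟩ := hp.exists_height
  have hreach : ∀ v, (SimpleGraph.fromEdgeSet (parentEdges r p : Set (Sym2 V))).Reachable v r := by
    intro v
    induction hn : h v using Nat.strong_induction_on generalizing v with
    | _ n ih =>
      by_cases hv : v = r
      · rw [hv]
      · have hadj : (SimpleGraph.fromEdgeSet (parentEdges r p : Set (Sym2 V))).Adj v (p v) :=
          (SimpleGraph.fromEdgeSet_adj _).2 ⟨mem_parentEdges.2 ⟨v, hv, rfl⟩, hp.ne_parent hv⟩
        exact hadj.reachable.trans (ih (h (p v)) (hn ▸ hh v hv) (p v) rfl)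
  have hdiag : ∀ e ∈ (parentEdges r p : Set (Sym2 V)), ¬ e.IsDiag := by
    intro e he
    obtain ⟨v, hv, rfl⟩ := mem_parentEdges.1 (mem_coe.1 he)
    exact hp.ne_parent hv
  have : Nonempty V := ⟨r⟩
  refine SimpleGraph.isTree_iff_connected_and_card.2
    ⟨.mk fun u v ↦ (hreach u).trans (hreach v).symm, ?_⟩
  rw [edgeSet_fromEdgeSet_of_forall_not_isDiag hdiag, Nat.card_eq_fintype_card (α := V),
    ← hp.card_parentEdges]
  simp

theorem IsRootedAt.eqOn_of_parentEdges_eq (hp : IsRootedAt r p)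
    (hpq : parentEdges r p = parentEdges r q) : ∀ v ≠ r, p v = q v := by
  obtain ⟨h, hh⟩ := hp.exists_height
  -- If `p v ≠ q v`, then the edge `{v, p v}` is traversed upwards by `q`, so `p` and `q` also
  -- differ at `p v`, which has smaller height.
  intro v hv
  induction hn : h v using Nat.strong_induction_on generalizing v with
  | _ n ih =>
    have hmem : s(v, p v) ∈ parentEdges r q := hpq ▸ mem_parentEdges.2 ⟨v, hv, rfl⟩
    obtain ⟨u, hu, huv⟩ := mem_parentEdges.1 hmem
    rcases Sym2.eq_iff.1 huv with ⟨huv, hq⟩ | ⟨huv, hq⟩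
    · rw [← hq, huv]
    · rw [huv] at hu hq
      have hlt := hh v hv
      have hlt' := hh (p v) hu
      rw [ih _ (hn ▸ hlt) (p v) hu rfl, hq] at hlt'
      exact absurd hlt hlt'.not_gt

theorem exists_isRootedAt_parentEdges_eq (r : V) {T : Finset (Sym2 V)}
    (hT : (SimpleGraph.fromEdgeSet (T : Set (Sym2 V))).IsTree) (hdiag : ∀ e ∈ T, ¬ e.IsDiag) :
    ∃ p, p r = r ∧ IsRootedAt r p ∧ parentEdges r p = T := by
  set H := SimpleGraph.fromEdgeSet (T : Set (Sym2 V))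
  have hcloser : ∀ v, ∃ u, v ≠ r → H.Adj v u ∧ H.dist u r < H.dist v r := by
    intro v
    obtain ⟨W, hW⟩ := hT.connected.exists_walk_length_eq_dist v r
    cases W with
    | nil => exact ⟨r, fun hv ↦ absurd rfl hv⟩
    | cons hadj W =>
      refine ⟨_, fun _ ↦ ⟨hadj, ?_⟩⟩
      rw [← hW, SimpleGraph.Walk.length_cons]
      exact Nat.lt_succ_of_le (SimpleGraph.dist_le W)
  choose p₀ hp₀ using hcloser
  let p := Function.update p₀ r r
  have hpadj : ∀ v ≠ r, H.Adj v (p v) ∧ H.dist (p v) r < H.dist v r := by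
    intro v hv
    simpa only [p, Function.update_of_ne hv] using hp₀ v hv
  have hroot : IsRootedAt r p := isRootedAt_of_height (H.dist · r) fun v hv ↦ (hpadj v hv).2
  refine ⟨p, Function.update_self .., hroot, eq_of_subset_of_card_le (fun e he ↦ ?_) ?_⟩
  · obtain ⟨v, hv, rfl⟩ := mem_parentEdges.1 he
    exact ((SimpleGraph.fromEdgeSet_adj _).1 (hpadj v hv).1).1
  · have hcard := (SimpleGraph.isTree_iff_connected_and_card.1 hT).2
    rw [edgeSet_fromEdgeSet_of_forall_not_isDiag hdiag, Nat.card_eq_fintype_card (α := V),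
      ← hroot.card_parentEdges] at hcard
    simp only [coe_sort_coe, Nat.card_eq_fintype_card, Fintype.card_coe] at hcard
    exact (Nat.add_right_cancel hcard).le

end ParentMap

variable [Fintype V] [DecidableEq V]

/-- The finite set of spanning trees of `G`, each encoded by its edge set. -/
noncomputable def spanningTrees (G : SimpleGraph V) : Finset (Finset (Sym2 V)) :=
  univ.filter (IsSpanningTree G)

theorem mem_spanningTrees {G : SimpleGraph V} {T : Finset (Sym2 V)} :
    T ∈ spanningTrees G ↔ IsSpanningTree G T := by
  simp [spanningTrees]

section MatrixTree

variable {R : Type*} [CommRing R] (G : SimpleGraph V) [DecidableRel G.Adj]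

/-- The maps that send every vertex other than `r` to a neighbour and fix `r`. -/
def parentMaps (r : V) : Finset (V → V) :=
  Fintype.piFinset fun v ↦ if v = r then {r} else G.neighborFinset v

variable {G}

theorem mem_parentMaps {r : V} {p : V → V} :
    p ∈ parentMaps G r ↔ p r = r ∧ ∀ v ≠ r, G.Adj v (p v) := by
  rw [parentMaps, Fintype.mem_piFinset]
  refine ⟨fun hp ↦ ⟨by simpa using hp r, fun v hv ↦ by simpa [hv] using hp v⟩, fun hp v ↦ ?_⟩
  split_ifs with hv
  · simp [hv, hp.1]
  · simpa using hp.2 v hv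

theorem card_filter_isRootedAt (r : V) :
    #((parentMaps G r).filter (IsRootedAt r)) = #(spanningTrees G) := by
  refine card_bij (fun p _ ↦ parentEdges r p) (fun p hp ↦ ?_) (fun p hp q hq hpq ↦ ?_)
    (fun T hT ↦ ?_)
  · obtain ⟨hpG, hroot⟩ := mem_filter.1 hp
    refine mem_spanningTrees.2 ⟨fun e he ↦ ?_, hroot.isTree⟩
    obtain ⟨v, hv, rfl⟩ := mem_parentEdges.1 (mem_coe.1 he)
    exact (mem_parentMaps.1 hpG).2 v hv
  · obtain ⟨hpG, hroot⟩ := mem_filter.1 hp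
    have hqG := (mem_filter.1 hq).1
    ext v
    by_cases hv : v = r
    · rw [hv, (mem_parentMaps.1 hpG).1, (mem_parentMaps.1 hqG).1]
    · exact hroot.eqOn_of_parentEdges_eq hpq v hv
  · obtain ⟨hTG, hT⟩ := mem_spanningTrees.1 hT
    have hdiag : ∀ e ∈ T, ¬ e.IsDiag := fun e he ↦ G.not_isDiag_of_mem_edgeSet (hTG he)
    obtain ⟨p, hpr, hroot, rfl⟩ := exists_isRootedAt_parentEdges_eq r hT hdiag
    refine ⟨p, mem_filter.2 ⟨mem_parentMaps.2 ⟨hpr, fun v hv ↦ ?_⟩, hroot⟩, rfl⟩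
    exact hTG (mem_coe.2 (mem_parentEdges.2 ⟨v, hv, rfl⟩))

variable (G R)

theorem lapMatrix_row_eq_sum (v : V) :
    G.lapMatrix R v = ∑ y ∈ G.neighborFinset v, (Pi.single v 1 - Pi.single y 1) := by
  ext w
  simp [SimpleGraph.lapMatrix, SimpleGraph.degMatrix, diagonal_apply, Pi.single_apply,
    SimpleGraph.adjMatrix_apply, Finset.sum_apply, eq_comm (a := v)]

theorem lapMatrix_mulVec_one : G.lapMatrix R *ᵥ 1 = 0 :=
  G.lapMatrix_mulVec_const_eq_zero

theorem one_vecMul_lapMatrix : 1 ᵥ* G.lapMatrix R = 0 := by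
  rw [← mulVec_transpose, (G.isSymm_lapMatrix (R := R)).eq, lapMatrix_mulVec_one]

theorem lapMatrix_updateRow_eq_sum (r : V) :
    (G.lapMatrix R).updateRow r (Pi.single r 1) =
      of fun v ↦ ∑ y ∈ if v = r then {r} else G.neighborFinset v,
        (Pi.single v 1 - if v = r then 0 else Pi.single y 1) := by
  ext v w
  by_cases hv : v = r
  · subst hv
    simp
  · simp only [updateRow_ne hv, lapMatrix_row_eq_sum, of_apply, if_neg hv]

theorem det_lapMatrix_updateRow (r : V) :
    ((G.lapMatrix R).updateRow r (Pi.single r 1)).det = #(spanningTrees G) := by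
  calc ((G.lapMatrix R).updateRow r (Pi.single r 1)).det
      = ∑ p ∈ parentMaps G r, (parentMatrix R r p).det := by
        rw [lapMatrix_updateRow_eq_sum]
        exact (detRowAlternating (n := V) (R := R)).toMultilinearMap.map_sum_finset _ _
    _ = ∑ p ∈ parentMaps G r, if IsRootedAt r p then 1 else 0 := by
        refine sum_congr rfl fun p _ ↦ ?_
        split_ifs with hp
        exacts [hp.det_parentMatrix, det_parentMatrix_of_not_isRootedAt hp]
    _ = #(spanningTrees G) := by
        rw [sum_boole, card_filter_isRootedAt]

theorem det_lapMatrix [Nonempty V] : (G.lapMatrix R).det = 0 := by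
  have hker := det_smul_eq_zero_of_mulVec_eq_zero (lapMatrix_mulVec_one R G)
  simpa using congrFun hker (Classical.arbitrary V)

theorem det_lapMatrix_add_vecMulVec_single (r : V) :
    (G.lapMatrix R + vecMulVec (Pi.single r 1) (Pi.single r 1)).det =
      (#(spanningTrees G) : R) := by
  have : Nonempty V := ⟨r⟩
  have hrow : G.lapMatrix R + vecMulVec (Pi.single r 1) (Pi.single r 1) =
      (G.lapMatrix R).updateRow r (G.lapMatrix R r + Pi.single r 1) := by
    ext v w
    by_cases hv : v = r
    · subst hv
      simp [vecMulVec_apply]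
    · simp [vecMulVec_apply, hv]
  rw [hrow, det_updateRow_add, updateRow_eq_self, det_lapMatrix, zero_add, det_lapMatrix_updateRow]

variable {R} in
theorem det_one_add_vecMulVec (u v : V → R) : (1 + vecMulVec u v).det = 1 + v ⬝ᵥ u := by
  rw [vecMulVec_eq Unit, det_one_add_replicateCol_mul_replicateRow]

variable {R} in
theorem det_lapMatrix_add_vecMulVec [Nonempty V] (u v : V → R) :
    (G.lapMatrix R + vecMulVec u v).det = (∑ x, u x) * (∑ x, v x) * #(spanningTrees G) := by
  obtain ⟨r⟩ := ‹Nonempty V›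
  have hfactor : (1 + vecMulVec (u - Pi.single r 1) 1) *
      (G.lapMatrix R + vecMulVec (Pi.single r 1) (Pi.single r 1)) *
      (1 + vecMulVec 1 (v - Pi.single r 1)) = G.lapMatrix R + vecMulVec u v := by
    have hleft : (1 + vecMulVec (u - Pi.single r 1) 1) *
        (G.lapMatrix R + vecMulVec (Pi.single r 1) (Pi.single r 1)) =
        G.lapMatrix R + vecMulVec u (Pi.single r 1) := by
      simp [add_mul, sub_mul, mul_add, vecMulVec_mul, one_vecMul_lapMatrix, sub_vecMulVec,
        vecMul_vecMulVec, -vecMulVec_one]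
    rw [hleft]
    simp [add_mul, mul_add, mul_sub, mul_vecMulVec, lapMatrix_mulVec_one, vecMulVec_sub,
      vecMulVec_mulVec, -one_vecMulVec]
  rw [← hfactor, det_mul, det_mul, det_lapMatrix_add_vecMulVec_single, det_one_add_vecMulVec,
    det_one_add_vecMulVec]
  simp only [one_dotProduct, dotProduct_one, dotProduct_sub, dotProduct_single_one, Pi.one_apply,
    Pi.sub_apply, sum_sub_distrib, sum_pi_single', mem_univ, if_true, add_sub_cancel]
  ring

end MatrixTree

section GreenMatrix

theorem spanningTrees_nonempty {G : SimpleGraph V} (hG : G.Connected) :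
    (spanningTrees G).Nonempty := by
  obtain ⟨H, hHG, hH⟩ := hG.exists_isTree_le
  refine ⟨H.edgeFinset, mem_spanningTrees.2 ⟨?_, ?_⟩⟩
  · simpa using hHG
  · simpa using hH

variable (G : SimpleGraph V) [DecidableRel G.Adj]

/-- The Green matrix of `G`. The all-ones matrix `vecMulVec 1 1` makes the Laplacian of a connected
graph invertible without changing its action on the vectors of sum zero. If `G` is disconnected,
the inverse takes its junk value `0`. -/
noncomputable def greenMatrix : Matrix V V ℝ :=
  (G.lapMatrix ℝ + vecMulVec 1 1)⁻¹

variable {G}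

theorem isUnit_lapMatrix_add_vecMulVec (hG : G.Connected) :
    IsUnit (G.lapMatrix ℝ + vecMulVec 1 1).det := by
  have := hG.nonempty
  rw [det_lapMatrix_add_vecMulVec, isUnit_iff_ne_zero]
  simpa using (spanningTrees_nonempty hG).ne_empty

variable (G) in
theorem isSymm_greenMatrix : (greenMatrix G).IsSymm := by
  rw [IsSymm, greenMatrix, transpose_nonsing_inv, transpose_add, transpose_vecMulVec,
    (G.isSymm_lapMatrix (R := ℝ)).eq]

variable (G) in
theorem posSemidef_greenMatrix : (greenMatrix G).PosSemidef :=
  ((G.posSemidef_lapMatrix ℝ).add (posSemidef_vecMulVec_self_star 1)).inv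

theorem greenMatrix_mulVec_one (hG : G.Connected) :
    greenMatrix G *ᵥ 1 = (Fintype.card V : ℝ)⁻¹ • 1 := by
  have := hG.nonempty
  have hone : (G.lapMatrix ℝ + vecMulVec 1 1) *ᵥ ((Fintype.card V : ℝ)⁻¹ • 1) = 1 := by
    rw [mulVec_smul, add_mulVec, lapMatrix_mulVec_one, vecMulVec_mulVec]
    ext
    simp
  calc greenMatrix G *ᵥ 1
      = greenMatrix G *ᵥ (G.lapMatrix ℝ + vecMulVec 1 1) *ᵥ ((Fintype.card V : ℝ)⁻¹ • 1) := by
        rw [hone]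
    _ = (Fintype.card V : ℝ)⁻¹ • 1 := by
        rw [greenMatrix, mulVec_mulVec, nonsing_inv_mul _ (isUnit_lapMatrix_add_vecMulVec hG),
          one_mulVec]

theorem greenMatrix_mul_lapMatrix (hG : G.Connected) :
    greenMatrix G * G.lapMatrix ℝ = 1 - (Fintype.card V : ℝ)⁻¹ • vecMulVec 1 1 := by
  rw [eq_sub_iff_add_eq, ← smul_vecMulVec, ← greenMatrix_mulVec_one hG, ← mul_vecMulVec, ← mul_add,
    greenMatrix, nonsing_inv_mul _ (isUnit_lapMatrix_add_vecMulVec hG)]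

theorem lapMatrix_mul_greenMatrix (hG : G.Connected) :
    G.lapMatrix ℝ * greenMatrix G = 1 - (Fintype.card V : ℝ)⁻¹ • vecMulVec 1 1 := by
  rw [← (G.isSymm_lapMatrix (R := ℝ)).eq, ← (isSymm_greenMatrix G).eq, ← transpose_mul,
    greenMatrix_mul_lapMatrix hG, transpose_sub, transpose_one, transpose_smul, transpose_vecMulVec]

/-- The vector of a unit current that enters the graph at `x` and leaves it at `y`. -/
def dipole (x y : V) : V → ℝ :=
  Pi.single x 1 - Pi.single y 1

variable (G) in
/-- The effective resistance between `x` and `y` in the network `G` of unit resistors. -/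
noncomputable def effRes (x y : V) : ℝ :=
  dipole x y ⬝ᵥ greenMatrix G *ᵥ dipole x y

variable (G) in
theorem effRes_nonneg (x y : V) : 0 ≤ effRes G x y := by
  simpa [effRes] using (posSemidef_greenMatrix G).dotProduct_mulVec_nonneg (dipole x y)

end GreenMatrix

section TransferCurrent

/-- The probability that a uniform spanning tree of `G` has the property `p`; it is `0` if `G` has
no spanning tree. -/
noncomputable def ustProb (G : SimpleGraph V) (p : Finset (Sym2 V) → Prop) : ℝ :=
  𝔼 T ∈ spanningTrees G, if p T then 1 else 0

theorem ustProb_eq_card_div_card (G : SimpleGraph V) (p : Finset (Sym2 V) → Prop) :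
    ustProb G p = #((spanningTrees G).filter p) / #(spanningTrees G) := by
  rw [ustProb, expect_eq_sum_div_card, sum_boole]

theorem ustProb_not (hG : G.Connected) (p : Finset (Sym2 V) → Prop) :
    ustProb G (fun T ↦ ¬ p T) = 1 - ustProb G p := by
  rw [eq_sub_iff_add_eq, ustProb, ustProb, ← expect_add_distrib]
  refine (expect_congr rfl fun T _ ↦ ?_).trans (expect_const (spanningTrees_nonempty hG) 1)
  by_cases hp : p T <;> simp [hp]

theorem ustProb_or_add_ustProb_and (G : SimpleGraph V) (p q : Finset (Sym2 V) → Prop) :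
    ustProb G (fun T ↦ p T ∨ q T) + ustProb G (fun T ↦ p T ∧ q T) = ustProb G p + ustProb G q := by
  simp only [ustProb, ← expect_add_distrib]
  refine expect_congr rfl fun T _ ↦ ?_
  by_cases hp : p T <;> by_cases hq : q T <;> simp [hp, hq]

theorem ustProb_le_one (G : SimpleGraph V) (p : Finset (Sym2 V) → Prop) : ustProb G p ≤ 1 := by
  rw [ustProb_eq_card_div_card]
  exact div_le_one_of_le₀ (by exact_mod_cast card_filter_le _ _) (Nat.cast_nonneg _)

theorem spanningTrees_deleteEdges (G : SimpleGraph V) (S : Set (Sym2 V)) :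
    spanningTrees (G.deleteEdges S) = (spanningTrees G).filter fun T ↦ ∀ e ∈ S, e ∉ T := by
  ext T
  rw [mem_filter, mem_spanningTrees, mem_spanningTrees, IsSpanningTree, IsSpanningTree,
    SimpleGraph.edgeSet_deleteEdges, Set.subset_sdiff, Set.disjoint_right, and_right_comm]
  rfl

omit [DecidableEq V] in
theorem ext_of_mulVec_one {A B : Matrix V V ℝ} (hAB : ∀ u v, u ≠ v → A u v = B u v)
    (hone : A *ᵥ 1 = B *ᵥ 1) : A = B := by
  classical
  ext u v
  obtain rfl | huv := eq_or_ne u v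
  · have hrow := congrFun hone u
    simp only [mulVec, dotProduct_one] at hrow
    rw [← add_sum_erase _ _ (mem_univ u), ← add_sum_erase _ _ (mem_univ u),
      sum_congr rfl fun v hv ↦ hAB u v (ne_of_mem_erase hv).symm] at hrow
    exact add_right_cancel hrow
  · exact hAB u v huv

theorem lapMatrix_apply_of_ne (G : SimpleGraph V) [DecidableRel G.Adj] {u v : V} (huv : u ≠ v) :
    G.lapMatrix ℝ u v = if G.Adj u v then -1 else 0 := by
  simp [SimpleGraph.lapMatrix, SimpleGraph.degMatrix, huv, SimpleGraph.adjMatrix_apply, apply_ite]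

variable {G : SimpleGraph V} {ι : Type*} {x y : ι → V}

/-- The signed incidence matrix of the edges `{x i, y i}`, oriented from `x i` to `y i`. -/
def incidence (x y : ι → V) : Matrix ι V ℝ :=
  of fun i ↦ dipole (x i) (y i)

theorem incidence_mulVec_one : incidence x y *ᵥ 1 = 0 := by
  ext i
  change dipole (x i) (y i) ⬝ᵥ 1 = 0
  simp [dipole]

theorem incidence_mul_mul_transpose_apply (K : Matrix V V ℝ) (x y : ι → V) (i j : ι) :
    (incidence x y * K * (incidence x y)ᵀ) i j =
      dipole (x i) (y i) ⬝ᵥ K *ᵥ dipole (x j) (y j) := by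
  rw [Matrix.mul_assoc]
  rfl

variable [Fintype ι]

omit [Fintype V] in
theorem transpose_incidence_mul_incidence_apply (hxy : ∀ i, x i ≠ y i)
    (hinj : Function.Injective fun i ↦ s(x i, y i)) {u v : V} (huv : u ≠ v) :
    ((incidence x y)ᵀ * incidence x y) u v =
      if s(u, v) ∈ Set.range fun i ↦ s(x i, y i) then -1 else 0 := by
  have hentry : ∀ i, incidence x y i u * incidence x y i v =
      if s(x i, y i) = s(u, v) then -1 else 0 := by
    intro i
    have := hxy i
    simp only [incidence, of_apply, dipole, Pi.sub_apply, Pi.single_apply, Sym2.eq_iff]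
    grind
  simp only [mul_apply, transpose_apply, hentry, Set.mem_range]
  split_ifs with h
  · obtain ⟨i, hi⟩ := h
    rw [Fintype.sum_eq_single i fun j hj ↦ if_neg fun h ↦ hj (hinj (h.trans hi.symm)), if_pos hi]
  · exact sum_eq_zero fun i _ ↦ if_neg fun hi ↦ h ⟨i, hi⟩

theorem lapMatrix_deleteEdges [DecidableRel G.Adj] (hadj : ∀ i, G.Adj (x i) (y i))
    (hinj : Function.Injective fun i ↦ s(x i, y i)) :
    (G.deleteEdges (Set.range fun i ↦ s(x i, y i))).lapMatrix ℝ =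
      G.lapMatrix ℝ - (incidence x y)ᵀ * incidence x y := by
  refine ext_of_mulVec_one (fun u v huv ↦ ?_) ?_
  · have hGuv : s(u, v) ∈ (Set.range fun i ↦ s(x i, y i)) → G.Adj u v := by
      rintro ⟨i, hi⟩
      rw [← SimpleGraph.mem_edgeSet, ← hi]
      exact hadj i
    rw [Matrix.sub_apply, transpose_incidence_mul_incidence_apply (fun i ↦ (hadj i).ne) hinj huv,
      lapMatrix_apply_of_ne _ huv, lapMatrix_apply_of_ne _ huv]
    simp only [SimpleGraph.deleteEdges_adj]
    grind
  · rw [lapMatrix_mulVec_one, sub_mulVec, lapMatrix_mulVec_one, ← mulVec_mulVec,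
      incidence_mulVec_one, mulVec_zero, sub_zero]

/-- The transfer current theorem, for the event that the tree contains none of the given edges. -/
theorem ustProb_forall_notMem [DecidableEq ι] [DecidableRel G.Adj] (hG : G.Connected)
    (hadj : ∀ i, G.Adj (x i) (y i)) (hinj : Function.Injective fun i ↦ s(x i, y i)) :
    ustProb G (fun T ↦ ∀ i, s(x i, y i) ∉ T) =
      (1 - incidence x y * greenMatrix G * (incidence x y)ᵀ).det := by
  have := hG.nonempty
  set S := Set.range fun i ↦ s(x i, y i)
  have htrees : (#(spanningTrees (G.deleteEdges S)) : ℝ) =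
      #(spanningTrees G) * (1 - incidence x y * greenMatrix G * (incidence x y)ᵀ).det := by
    have hdet := det_add_mul (A := G.lapMatrix ℝ + vecMulVec 1 1) (-(incidence x y)ᵀ)
      (incidence x y) (isUnit_lapMatrix_add_vecMulVec hG)
    rw [Matrix.neg_mul, add_right_comm, ← sub_eq_add_neg, ← lapMatrix_deleteEdges hadj hinj,
      det_lapMatrix_add_vecMulVec, det_lapMatrix_add_vecMulVec, Matrix.mul_neg, ← sub_eq_add_neg,
      mul_assoc _ (#(spanningTrees G) : ℝ)] at hdet
    refine mul_left_cancel₀ ?_ hdet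
    simp
  have hN : (#(spanningTrees G) : ℝ) ≠ 0 := by
    simpa using (spanningTrees_nonempty hG).ne_empty
  rw [ustProb_eq_card_div_card, div_eq_iff hN, mul_comm, ← htrees, spanningTrees_deleteEdges]
  congr 2
  ext T
  simp [S]

/-- Kirchhoff's formula. -/
theorem ustProb_mem [DecidableRel G.Adj] (hG : G.Connected) {x y : V} (hxy : G.Adj x y) :
    ustProb G (s(x, y) ∈ ·) = effRes G x y := by
  have hnot := ustProb_forall_notMem (ι := Unit) (x := fun _ ↦ x) (y := fun _ ↦ y) hG
    (fun _ ↦ hxy) (Function.injective_of_subsingleton _)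
  rw [det_unique, Matrix.sub_apply, one_apply_eq, incidence_mul_mul_transpose_apply] at hnot
  simp only [forall_const, ustProb_not hG] at hnot
  exact sub_right_injective hnot

theorem effRes_le_one [DecidableRel G.Adj] (hG : G.Connected) {x y : V} (hxy : G.Adj x y) :
    effRes G x y ≤ 1 :=
  ustProb_mem hG hxy ▸ ustProb_le_one G _

theorem ustProb_mem_and_mem [DecidableRel G.Adj] (hG : G.Connected) {x y u v : V}
    (hxy : G.Adj x y) (huv : G.Adj u v) (hne : s(x, y) ≠ s(u, v)) :
    ustProb G (fun T ↦ s(x, y) ∈ T ∧ s(u, v) ∈ T) =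
      effRes G x y * effRes G u v - (dipole x y ⬝ᵥ greenMatrix G *ᵥ dipole u v) ^ 2 := by
  have hsymm : dipole u v ⬝ᵥ greenMatrix G *ᵥ dipole x y =
      dipole x y ⬝ᵥ greenMatrix G *ᵥ dipole u v := by
    rw [dotProduct_mulVec, ← mulVec_transpose, (isSymm_greenMatrix G).eq, dotProduct_comm]
  have hnot := ustProb_forall_notMem (x := ![x, u]) (y := ![y, v]) hG
    (by simp [Fin.forall_fin_two, hxy, huv]) (by
      intro i j
      fin_cases i <;> fin_cases j <;> simp [hne, hne.symm])
  simp only [Fin.forall_fin_two, ← not_or, ustProb_not hG, det_fin_two, Matrix.sub_apply,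
    incidence_mul_mul_transpose_apply] at hnot
  simp only [cons_val_zero, cons_val_one, one_apply_eq, one_apply_ne zero_ne_one,
    one_apply_ne one_ne_zero, hsymm] at hnot
  have hor := ustProb_or_add_ustProb_and G (s(x, y) ∈ ·) (s(u, v) ∈ ·)
  rw [ustProb_mem hG hxy, ustProb_mem hG huv] at hor
  simp only [effRes] at hor ⊢
  linear_combination hor + hnot

theorem ustProb_mem_and_mem_le [DecidableRel G.Adj] (hG : G.Connected) {x y u v : V}
    (hxy : G.Adj x y) (huv : G.Adj u v) (hne : s(x, y) ≠ s(u, v)) :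
    ustProb G (fun T ↦ s(x, y) ∈ T ∧ s(u, v) ∈ T) ≤ effRes G x y * effRes G u v := by
  rw [ustProb_mem_and_mem hG hxy huv hne]
  exact sub_le_self _ (sq_nonneg _)

end TransferCurrent

section Resistance

variable (G : SimpleGraph V) [DecidableRel G.Adj]

omit [DecidableEq V] in
theorem sum_neighborFinset_comm {M : Type*} [AddCommMonoid M] (f : V → V → M) :
    ∑ x, ∑ y ∈ G.neighborFinset x, f x y = ∑ x, ∑ y ∈ G.neighborFinset x, f y x :=
  sum_comm' fun x y ↦ by simp [G.adj_comm]

theorem lapMatrix_row_eq_sum_dipole (x : V) :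
    G.lapMatrix ℝ x = ∑ y ∈ G.neighborFinset x, dipole x y :=
  lapMatrix_row_eq_sum ℝ G x

theorem sum_dipole_dotProduct_mulVec (K : Matrix V V ℝ) :
    ∑ x, ∑ y ∈ G.neighborFinset x, dipole x y ⬝ᵥ K *ᵥ dipole x y =
      2 * (G.lapMatrix ℝ * K).trace := by
  have htrace : (G.lapMatrix ℝ * K).trace =
      ∑ x, ∑ y ∈ G.neighborFinset x, dipole x y ⬝ᵥ K *ᵥ Pi.single x 1 := by
    simp_rw [← sum_dotProduct, ← lapMatrix_row_eq_sum_dipole, mulVec_single_one]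
    rfl
  have hswap : (G.lapMatrix ℝ * K).trace =
      -∑ x, ∑ y ∈ G.neighborFinset x, dipole x y ⬝ᵥ K *ᵥ Pi.single y 1 := by
    rw [htrace, sum_neighborFinset_comm, ← sum_neg_distrib]
    refine sum_congr rfl fun x _ ↦ ?_
    rw [← sum_neg_distrib]
    refine sum_congr rfl fun y _ ↦ ?_
    rw [← neg_dotProduct, dipole, dipole, neg_sub]
  rw [two_mul]
  nth_rewrite 2 [hswap]
  rw [htrace, ← sub_eq_add_neg]
  simp_rw [← sum_sub_distrib, ← dotProduct_sub, ← mulVec_sub]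
  rfl

variable {G}

/-- Foster's first identity. -/
theorem sum_effRes (hG : G.Connected) :
    ∑ x, ∑ y ∈ G.neighborFinset x, effRes G x y = 2 * (Fintype.card V - 1) := by
  have := hG.nonempty
  simp_rw [effRes]
  rw [sum_dipole_dotProduct_mulVec, lapMatrix_mul_greenMatrix hG, trace_sub, trace_smul,
    trace_vecMulVec]
  simp

variable (G) in
/-- The transition matrix of the simple random walk on `G`; the row of an isolated vertex is
zero. -/
noncomputable def walkMatrix : Matrix V V ℝ :=
  diagonal (fun v ↦ (G.degree v : ℝ)⁻¹) * G.adjMatrix ℝ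

variable (G) in
/-- The energy of the current that enters the network at a random neighbour of `x` and leaves it at
a random neighbour of `y`. -/
noncomputable def neighborEnergy (x y : V) : ℝ :=
  dipole x y ⬝ᵥ (walkMatrix G * greenMatrix G * (walkMatrix G)ᵀ) *ᵥ dipole x y

variable (G) in
theorem neighborEnergy_nonneg (x y : V) : 0 ≤ neighborEnergy G x y := by
  have hpsd := (posSemidef_greenMatrix G).mul_mul_conjTranspose_same (walkMatrix G)
  simpa [neighborEnergy, conjTranspose_eq_transpose_of_trivial] using
    hpsd.dotProduct_mulVec_nonneg (dipole x y)

variable (G) in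
theorem walkMatrix_apply (x y : V) :
    walkMatrix G x y = if G.Adj x y then (G.degree x : ℝ)⁻¹ else 0 := by
  simp [walkMatrix, diagonal_mul, SimpleGraph.adjMatrix_apply, -SimpleGraph.mul_adjMatrix_apply]

theorem walkMatrix_eq_one_sub (hdeg : ∀ v, G.degree v ≠ 0) :
    walkMatrix G = 1 - diagonal (fun v ↦ (G.degree v : ℝ)⁻¹) * G.lapMatrix ℝ := by
  have : ∀ v, (G.degree v : ℝ) ≠ 0 := by exact_mod_cast hdeg
  rw [SimpleGraph.lapMatrix, SimpleGraph.degMatrix, Matrix.mul_sub, diagonal_mul_diagonal,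
    walkMatrix]
  simp [this]

theorem walkMatrix_mulVec_one (hdeg : ∀ v, G.degree v ≠ 0) : walkMatrix G *ᵥ 1 = 1 := by
  rw [walkMatrix_eq_one_sub hdeg, sub_mulVec, ← mulVec_mulVec, lapMatrix_mulVec_one, mulVec_zero,
    one_mulVec, sub_zero]

theorem lapMatrix_mul_walkMatrix (hdeg : ∀ v, G.degree v ≠ 0) :
    G.lapMatrix ℝ * walkMatrix G = (walkMatrix G)ᵀ * G.lapMatrix ℝ := by
  rw [walkMatrix_eq_one_sub hdeg, transpose_sub, transpose_mul, transpose_one, diagonal_transpose,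
    (G.isSymm_lapMatrix (R := ℝ)).eq]
  noncomm_ring

theorem greenMatrix_mulVec_eq (hG : G.Connected) (hdeg : ∀ v, G.degree v ≠ 0) {b : V → ℝ}
    (hb : 1 ⬝ᵥ b = 0) :
    greenMatrix G *ᵥ b =
      diagonal (fun v ↦ (G.degree v : ℝ)⁻¹) *ᵥ b + walkMatrix G *ᵥ greenMatrix G *ᵥ b := by
  have hLb : G.lapMatrix ℝ *ᵥ greenMatrix G *ᵥ b = b := by
    rw [mulVec_mulVec, lapMatrix_mul_greenMatrix hG, sub_mulVec, one_mulVec, smul_mulVec,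
      vecMulVec_mulVec, hb]
    simp
  rw [walkMatrix_eq_one_sub hdeg, sub_mulVec, ← mulVec_mulVec, hLb, one_mulVec, add_sub_cancel]

theorem dipole_dotProduct_mulVec_dipole (K : Matrix V V ℝ) (x y : V) :
    dipole x y ⬝ᵥ K *ᵥ dipole x y = K x x - K y x - (K x y - K y y) := by
  simp [dipole, mulVec_sub, sub_dotProduct]

/-- One step of the walk at both ends of a unit current from `x` to `y`. -/
theorem effRes_eq_add_neighborEnergy (hG : G.Connected) (hdeg : ∀ v, G.degree v ≠ 0) {x y : V}
    (hxy : G.Adj x y) :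
    effRes G x y = (G.degree x : ℝ)⁻¹ + (G.degree y : ℝ)⁻¹
      - 2 * ((G.degree x : ℝ)⁻¹ * (G.degree y : ℝ)⁻¹) + neighborEnergy G x y := by
  set b := dipole x y
  set Dinv := diagonal fun v ↦ (G.degree v : ℝ)⁻¹
  set P := walkMatrix G
  have hb : 1 ⬝ᵥ b = 0 := by simp [b, dipole, dotProduct_sub]
  have hPb : 1 ⬝ᵥ Pᵀ *ᵥ b = 0 := by
    rw [dotProduct_mulVec, vecMul_transpose, walkMatrix_mulVec_one hdeg, hb]
  have hstart : b ⬝ᵥ Dinv *ᵥ b = (G.degree x : ℝ)⁻¹ + (G.degree y : ℝ)⁻¹ := by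
    rw [dipole_dotProduct_mulVec_dipole]
    simp [Dinv, hxy.ne, hxy.ne']
  have hcross : b ⬝ᵥ (Dinv * Pᵀ) *ᵥ b = -2 * ((G.degree x : ℝ)⁻¹ * (G.degree y : ℝ)⁻¹) := by
    rw [dipole_dotProduct_mulVec_dipole]
    simp only [Dinv, P, diagonal_mul, transpose_apply, walkMatrix_apply, SimpleGraph.irrefl,
      if_false, if_true, hxy, hxy.symm]
    ring
  calc effRes G x y
      = b ⬝ᵥ Dinv *ᵥ b + b ⬝ᵥ P *ᵥ greenMatrix G *ᵥ b := by
        rw [← dotProduct_add, ← greenMatrix_mulVec_eq hG hdeg hb, effRes]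
    _ = b ⬝ᵥ Dinv *ᵥ b + b ⬝ᵥ greenMatrix G *ᵥ Pᵀ *ᵥ b := by
        rw [dotProduct_mulVec b P, ← mulVec_transpose, dotProduct_comm (Pᵀ *ᵥ b),
          dotProduct_mulVec b (greenMatrix G), ← mulVec_transpose, (isSymm_greenMatrix G).eq]
    _ = b ⬝ᵥ Dinv *ᵥ b + (b ⬝ᵥ (Dinv * Pᵀ) *ᵥ b + neighborEnergy G x y) := by
        rw [greenMatrix_mulVec_eq hG hdeg hPb, dotProduct_add, neighborEnergy]
        simp only [mulVec_mulVec, Matrix.mul_assoc]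
        rfl
    _ = _ := by
        rw [hstart, hcross]
        ring

/-- Foster's second identity. -/
theorem sum_neighborEnergy (hG : G.Connected) (hdeg : ∀ v, G.degree v ≠ 0) :
    ∑ x, ∑ y ∈ G.neighborFinset x, neighborEnergy G x y =
      2 * ((walkMatrix G * walkMatrix G).trace - 1) := by
  have := hG.nonempty
  set P := walkMatrix G
  have hproj : G.lapMatrix ℝ * (P * greenMatrix G * Pᵀ) =
      Pᵀ * Pᵀ - (Fintype.card V : ℝ)⁻¹ • vecMulVec (Pᵀ *ᵥ 1) 1 := by
    calc G.lapMatrix ℝ * (P * greenMatrix G * Pᵀ)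
        = Pᵀ * (G.lapMatrix ℝ * greenMatrix G) * Pᵀ := by
          simp only [← Matrix.mul_assoc, lapMatrix_mul_walkMatrix hdeg, P]
      _ = Pᵀ * Pᵀ - (Fintype.card V : ℝ)⁻¹ • vecMulVec (Pᵀ *ᵥ 1) 1 := by
          rw [lapMatrix_mul_greenMatrix hG, Matrix.mul_sub, Matrix.mul_one, Matrix.sub_mul,
            Matrix.mul_smul, Matrix.smul_mul, mul_vecMulVec, vecMulVec_mul, vecMul_transpose,
            walkMatrix_mulVec_one hdeg]
  have hone : Pᵀ *ᵥ 1 ⬝ᵥ 1 = (Fintype.card V : ℝ) := by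
    rw [mulVec_transpose, ← dotProduct_mulVec, walkMatrix_mulVec_one hdeg]
    simp
  simp_rw [neighborEnergy]
  rw [sum_dipole_dotProduct_mulVec, hproj, trace_sub, trace_smul, trace_vecMulVec, hone,
    ← transpose_mul, trace_transpose]
  simp

theorem trace_walkMatrix_mul_walkMatrix_le (hδ : 0 < G.minDegree) :
    (walkMatrix G * walkMatrix G).trace ≤ Fintype.card V / G.minDegree := by
  calc (walkMatrix G * walkMatrix G).trace
      = ∑ x, ∑ y ∈ G.neighborFinset x, (G.degree x : ℝ)⁻¹ * (G.degree y : ℝ)⁻¹ := by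
        refine sum_congr rfl fun x _ ↦ ?_
        rw [diag_apply, mul_apply, G.neighborFinset_eq_filter, sum_filter]
        refine sum_congr rfl fun y _ ↦ ?_
        simp only [walkMatrix_apply, G.adj_comm y x]
        split_ifs <;> simp
    _ ≤ ∑ x, ∑ _y ∈ G.neighborFinset x, (G.degree x : ℝ)⁻¹ * (G.minDegree : ℝ)⁻¹ := by
        gcongr with x _ y _
        exact G.minDegree_le_degree y
    _ = ∑ x, (G.degree x : ℝ) * (G.degree x : ℝ)⁻¹ * (G.minDegree : ℝ)⁻¹ := by
        simp [mul_assoc]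
    _ ≤ ∑ _x : V, 1 * (G.minDegree : ℝ)⁻¹ := by
        gcongr with x
        exact mul_inv_le_one
    _ = Fintype.card V / G.minDegree := by
        simp [div_eq_mul_inv]

theorem effRes_sq_le (hG : G.Connected) (hδ : 0 < G.minDegree) {x y : V} (hxy : G.Adj x y) :
    effRes G x y ^ 2 ≤ 2 / G.minDegree * effRes G x y + neighborEnergy G x y := by
  have hdeg : ∀ v, (G.degree v : ℝ)⁻¹ ≤ (G.minDegree : ℝ)⁻¹ := fun v ↦ by
    gcongr
    exact G.minDegree_le_degree v
  have hR : effRes G x y ≤ 2 / G.minDegree + neighborEnergy G x y := by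
    rw [effRes_eq_add_neighborEnergy hG (fun v ↦ (hδ.trans_le (G.minDegree_le_degree v)).ne') hxy,
      div_eq_mul_inv]
    have : (0 : ℝ) ≤ (G.degree x : ℝ)⁻¹ * (G.degree y : ℝ)⁻¹ := by positivity
    linarith [hdeg x, hdeg y]
  calc effRes G x y ^ 2
      ≤ (2 / G.minDegree + neighborEnergy G x y) * effRes G x y := by
        rw [sq]
        exact mul_le_mul_of_nonneg_right hR (effRes_nonneg G x y)
    _ ≤ 2 / G.minDegree * effRes G x y + neighborEnergy G x y := by
        rw [add_mul]
        gcongr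
        exact mul_le_of_le_one_right (neighborEnergy_nonneg G x y) (effRes_le_one hG hxy)

theorem sum_effRes_sq_le (hG : G.Connected) :
    ∑ x, ∑ y ∈ G.neighborFinset x, effRes G x y ^ 2 ≤ 6 * Fintype.card V / G.minDegree := by
  cases subsingleton_or_nontrivial V
  · rw [sum_eq_zero fun x _ ↦ sum_eq_zero fun y hy ↦ ?_]
    · positivity
    · exact absurd (Subsingleton.elim x y) (G.ne_of_adj ((G.mem_neighborFinset x y).1 hy))
  have hδ : 0 < G.minDegree := hG.preconnected.minDegree_pos_of_nontrivial
  calc ∑ x, ∑ y ∈ G.neighborFinset x, effRes G x y ^ 2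
      ≤ ∑ x, ∑ y ∈ G.neighborFinset x,
          (2 / G.minDegree * effRes G x y + neighborEnergy G x y) := by
        gcongr with x _ y hy
        exact effRes_sq_le hG hδ ((G.mem_neighborFinset x y).1 hy)
    _ = 2 / G.minDegree * (2 * (Fintype.card V - 1)) +
          2 * ((walkMatrix G * walkMatrix G).trace - 1) := by
        simp only [sum_add_distrib, ← mul_sum]
        rw [sum_effRes hG,
          sum_neighborEnergy hG fun v ↦ (hδ.trans_le (G.minDegree_le_degree v)).ne']
    _ ≤ 2 / G.minDegree * (2 * Fintype.card V) + 2 * (Fintype.card V / G.minDegree) := by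
        gcongr
        · exact sub_le_self _ zero_le_one
        · exact (sub_le_self _ zero_le_one).trans (trace_walkMatrix_mul_walkMatrix_le hδ)
    _ = 6 * Fintype.card V / G.minDegree := by
        ring

end Resistance

section DegreeSecondMoment

variable {G : SimpleGraph V} [DecidableRel G.Adj]

theorem degIn_eq_card_filter {T : Finset (Sym2 V)} (hT : (T : Set (Sym2 V)) ⊆ G.edgeSet) (x : V) :
    degIn x T = #{y ∈ G.neighborFinset x | s(x, y) ∈ T} := by
  have himage : {e ∈ T | x ∈ e} = {y ∈ G.neighborFinset x | s(x, y) ∈ T}.image (s(x, ·)) := by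
    ext e
    simp only [mem_filter, mem_image, SimpleGraph.mem_neighborFinset]
    constructor
    · rintro ⟨he, y, rfl⟩
      exact ⟨y, ⟨hT he, he⟩, rfl⟩
    · rintro ⟨y, ⟨-, he⟩, rfl⟩
      exact ⟨he, Sym2.mem_mk_left x y⟩
  rw [degIn, himage, card_image_of_injective _ fun y z ↦ Sym2.congr_right.1]

theorem expect_degIn_sq (x : V) :
    𝔼 T ∈ spanningTrees G, (degIn x T : ℝ) ^ 2 =
      ∑ y ∈ G.neighborFinset x, ∑ z ∈ G.neighborFinset x,
        ustProb G (fun T ↦ s(x, y) ∈ T ∧ s(x, z) ∈ T) := by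
  simp_rw [ustProb, ← expect_sum_comm]
  refine expect_congr rfl fun T hT ↦ ?_
  rw [degIn_eq_card_filter (mem_spanningTrees.1 hT).1, ← sum_boole, sq, sum_mul_sum]
  refine sum_congr rfl fun y _ ↦ sum_congr rfl fun z _ ↦ ?_
  by_cases hy : s(x, y) ∈ T <;> simp [hy]

theorem expect_degIn_sq_le (hG : G.Connected) (x : V) :
    𝔼 T ∈ spanningTrees G, (degIn x T : ℝ) ^ 2 ≤
      ∑ y ∈ G.neighborFinset x, effRes G x y +
        G.degree x * ∑ y ∈ G.neighborFinset x, effRes G x y ^ 2 := by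
  have hpair : ∀ y ∈ G.neighborFinset x, ∀ z ∈ G.neighborFinset x,
      ustProb G (fun T ↦ s(x, y) ∈ T ∧ s(x, z) ∈ T) ≤
        (if y = z then effRes G x y else 0) + effRes G x y * effRes G x z := by
    intro y hy z hz
    rw [SimpleGraph.mem_neighborFinset] at hy hz
    obtain rfl | hyz := eq_or_ne y z
    · simpa only [and_self, ustProb_mem hG hy, if_true] using
        le_add_of_nonneg_right (mul_self_nonneg _)
    · rw [if_neg hyz, zero_add]
      exact ustProb_mem_and_mem_le hG hy hz (Sym2.congr_right.not.2 hyz)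
  calc 𝔼 T ∈ spanningTrees G, (degIn x T : ℝ) ^ 2
      ≤ ∑ y ∈ G.neighborFinset x, ∑ z ∈ G.neighborFinset x,
          ((if y = z then effRes G x y else 0) + effRes G x y * effRes G x z) :=
        (expect_degIn_sq x).trans_le
          (sum_le_sum fun y hy ↦ sum_le_sum fun z hz ↦ hpair y hy z hz)
    _ = ∑ y ∈ G.neighborFinset x, effRes G x y +
          (∑ y ∈ G.neighborFinset x, effRes G x y) ^ 2 := by
        simp only [sum_add_distrib, sum_ite_eq, sq, sum_mul_sum]
        rw [sum_congr rfl fun y hy ↦ if_pos hy]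
    _ ≤ ∑ y ∈ G.neighborFinset x, effRes G x y +
          G.degree x * ∑ y ∈ G.neighborFinset x, effRes G x y ^ 2 := by
        gcongr
        exact sq_sum_le_card_mul_sum_sq

theorem sum_expect_degIn_sq_le (hG : G.Connected) :
    ∑ x, 𝔼 T ∈ spanningTrees G, (degIn x T : ℝ) ^ 2 ≤
      (2 + 6 * (G.maxDegree / G.minDegree)) * Fintype.card V := by
  calc ∑ x, 𝔼 T ∈ spanningTrees G, (degIn x T : ℝ) ^ 2
      ≤ ∑ x, (∑ y ∈ G.neighborFinset x, effRes G x y +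
          G.maxDegree * ∑ y ∈ G.neighborFinset x, effRes G x y ^ 2) := by
        gcongr with x
        refine (expect_degIn_sq_le hG x).trans ?_
        gcongr
        exact G.degree_le_maxDegree x
    _ = 2 * (Fintype.card V - 1) +
          G.maxDegree * ∑ x, ∑ y ∈ G.neighborFinset x, effRes G x y ^ 2 := by
        rw [sum_add_distrib, ← mul_sum, sum_effRes hG]
    _ ≤ 2 * Fintype.card V + G.maxDegree * (6 * Fintype.card V / G.minDegree) := by
        gcongr
        · exact sub_le_self _ zero_le_one
        · exact sum_effRes_sq_le hG
    _ = (2 + 6 * (G.maxDegree / G.minDegree)) * Fintype.card V := by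
        ring

end DegreeSecondMoment

end UniformSpanningTree

theorem stmt15_general {V : Type*} [Fintype V] [DecidableEq V] {G : SimpleGraph V}
    [DecidableRel G.Adj] (hG : G.Connected) :
    (∑ T ∈ Finset.univ.filter (fun T => IsSpanningTree G T), ∑ x : V, (degIn x T : ℝ) ^ 2)
        / (((Finset.univ.filter (fun T => IsSpanningTree G T)).card : ℝ) * (Fintype.card V : ℝ))
      ≤ 2 + 6 * (G.maxDegree / G.minDegree) := by
  have := hG.nonempty
  have hsum := UniformSpanningTree.sum_expect_degIn_sq_le hG
  simp only [expect_eq_sum_div_card, ← sum_div] at hsum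
  rwa [← div_div, div_le_iff₀ (by positivity), sum_comm]

/-- There is a universal constant `C` such that for every finite connected
simple regular graph, the expected squared degree of a uniformly random vertex
in a uniform spanning tree is at most `C`.  The expectation is written as
`(Σ_{T spanning tree} Σ_x deg(x;T)²) / (#spanning trees · #vertices)`. -/
theorem stmt15 :
    ∃ C : ℝ, ∀ (V : Type) [Fintype V] [DecidableEq V]
      (G : SimpleGraph V) (d : ℕ),
      G.Connected → G.IsRegularOfDegree d →
      (∑ T ∈ Finset.univ.filter (fun T => IsSpanningTree G T),
          ∑ x : V, ((degIn x T : ℝ)) ^ 2)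
        / (((Finset.univ.filter (fun T => IsSpanningTree G T)).card : ℝ)
            * (Fintype.card V : ℝ))
        ≤ C := by
  refine ⟨8, fun V _ _ G d hG hd ↦ (stmt15_general hG).trans ?_⟩
  have := hG.nonempty
  rw [hd.maxDegree_eq, hd.minDegree_eq]
  linarith [div_self_le_one (d : ℝ)]
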